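/- Let d ≥ 1 and let u, v ∈ ℝ^d have nonnegative coordinates. Denote by ‖·‖ the ℓ¹ norm on ℝ^d. Then ‖ u/(1+‖u‖) − v/(1+‖v‖) ‖ ≤ 3‖u − v‖; that is, the normalization map w ↦ w/(1+‖w‖₁) is 3-Lipschitz on the nonnegative orthant with respect to the ℓ¹ norm. -/

import Mathlib

/-!
The constant 3 is not sharp: in every seminormed real vector space `w ↦ w / (1 + ‖w‖)` is
1-Lipschitz. By symmetry assume `‖v‖ ≤ ‖u‖`, and write
`u / (1 + ‖u‖) - v / (1 + ‖v‖) = (u - v + (‖v‖ - ‖u‖) v / (1 + ‖v‖)) / (1 + ‖u‖)`.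
Since `|‖v‖ - ‖u‖| ≤ ‖u - v‖`, the norm of the right-hand side is at most `‖u - v‖` times
`(1 + ‖v‖ / (1 + ‖v‖)) / (1 + ‖u‖) ≤ (1 + 2‖v‖) / (1 + ‖v‖)² ≤ 1`.
-/

theorem inv_smul_sub_inv_smul {K E : Type*} [DivisionRing K] [AddCommGroup E] [Module K E]
    {a b : K} (ha : a ≠ 0) (hb : b ≠ 0) (u v : E) :
    a⁻¹ • u - b⁻¹ • v = a⁻¹ • (u - v + (b - a) • b⁻¹ • v) := by
  have smul_inv_sub_inv : a⁻¹ • (b - a) • b⁻¹ • v = a⁻¹ • v - b⁻¹ • v := by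
    rw [smul_smul, smul_smul, ← inv_sub_inv' ha hb, sub_smul]
  rw [smul_add, smul_sub, smul_inv_sub_inv, sub_add_sub_cancel]

theorem one_add_div_one_add_div_one_add_le_one {a b : ℝ} (hb : 0 ≤ b) (hba : b ≤ a) :
    (1 + b / (1 + b)) / (1 + a) ≤ 1 := by
  calc (1 + b / (1 + b)) / (1 + a)
      ≤ (1 + b / (1 + b)) / (1 + b) := by gcongr
    _ = (1 + 2 * b) / (1 + b) ^ 2 := by field_simp; ring
    _ ≤ 1 := div_le_one_of_le₀ (by linarith [sq_nonneg b]) (sq_nonneg _)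

section SeminormedSpace

variable {E : Type*} [SeminormedAddCommGroup E] [NormedSpace ℝ E]

theorem norm_inv_one_add_norm_smul_sub_le (u v : E) :
    ‖(1 + ‖u‖)⁻¹ • u - (1 + ‖v‖)⁻¹ • v‖ ≤
      (1 + ‖v‖ / (1 + ‖v‖)) / (1 + ‖u‖) * ‖u - v‖ := by
  have hu : 0 < 1 + ‖u‖ := by positivity
  have hv : 0 < 1 + ‖v‖ := by positivity
  calc ‖(1 + ‖u‖)⁻¹ • u - (1 + ‖v‖)⁻¹ • v‖
      = (1 + ‖u‖)⁻¹ * ‖u - v + (‖v‖ - ‖u‖) • (1 + ‖v‖)⁻¹ • v‖ := by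
        rw [inv_smul_sub_inv_smul hu.ne' hv.ne', add_sub_add_left_eq_sub,
          norm_smul_of_nonneg (inv_nonneg.2 hu.le)]
    _ ≤ (1 + ‖u‖)⁻¹ * (‖u - v‖ + |‖v‖ - ‖u‖| * ((1 + ‖v‖)⁻¹ * ‖v‖)) := by
        gcongr
        refine (norm_add_le _ _).trans_eq ?_
        rw [norm_smul, norm_smul_of_nonneg (inv_nonneg.2 hv.le), Real.norm_eq_abs]
    _ ≤ (1 + ‖u‖)⁻¹ * (‖u - v‖ + ‖u - v‖ * ((1 + ‖v‖)⁻¹ * ‖v‖)) := by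
        gcongr
        rw [norm_sub_rev u v]
        exact abs_norm_sub_norm_le v u
    _ = (1 + ‖v‖ / (1 + ‖v‖)) / (1 + ‖u‖) * ‖u - v‖ := by ring

theorem normalization_three_lipschitz_general :
    LipschitzWith 1 fun w : E ↦ (1 + ‖w‖)⁻¹ • w := by
  refine LipschitzWith.of_dist_le_mul fun u v ↦ ?_
  wlog hvu : ‖v‖ ≤ ‖u‖ generalizing u v
  · simpa only [dist_comm] using this v u (le_of_not_ge hvu)
  rw [dist_eq_norm, dist_eq_norm]
  refine (norm_inv_one_add_norm_smul_sub_le u v).trans ?_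
  gcongr
  exact one_add_div_one_add_div_one_add_le_one (norm_nonneg v) hvu

end SeminormedSpace

/-- The normalization map `w ↦ w/(1 + ‖w‖₁)` is 3-Lipschitz on the nonnegative orthant
for the ℓ¹ norm `‖x‖ = ∑ i, |x i|`:
`‖u/(1+‖u‖) - v/(1+‖v‖)‖ ≤ 3‖u - v‖`. -/
theorem normalization_three_lipschitz (d : ℕ) (hd : 1 ≤ d) (u v : Fin d → ℝ)
    (hu : ∀ i, 0 ≤ u i) (hv : ∀ i, 0 ≤ v i) :
    ∑ i, |u i / (1 + ∑ j, |u j|) - v i / (1 + ∑ j, |v j|)| ≤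
      3 * ∑ i, |u i - v i| := by
  simpa [PiLp.norm_eq_of_L1, div_eq_inv_mul] using
    (normalization_three_lipschitz_general.weaken (by norm_num : (1 : NNReal) ≤ 3)).norm_sub_le
      (WithLp.toLp 1 u) (WithLp.toLp 1 v)
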